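/- Let G be a group and C a subgroup of G. Let Φ be the smallest collection of subsets of G that contains the underlying set of C and is closed under shifts (M ∈ Φ, u, v ∈ G implies uMv = {umv : m ∈ M} ∈ Φ) and under pairwise intersections. Then every nonempty D ∈ Φ has the form D = (⋂_{i=1}^{n} g_i⁻¹ C g_i)·h for some n ≥ 1 and elements g₁, …, g_n, h ∈ G. In particular, every nonempty member of Φ is a right coset of a finite intersection of conjugates of C. -/

import Mathlib

/-- The smallest collection of subsets of `G` containing (the carrier of) `C` and closed under
shifts `M ↦ uMv` and pairwise intersections. -/
inductive ShiftInterClosure {G : Type*} [Group G] (C : Subgroup G) : Set G → Prop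
  | base : ShiftInterClosure C (C : Set G)
  | shift (M : Set G) (u v : G) :
      ShiftInterClosure C M → ShiftInterClosure C ((fun m => u * m * v) '' M)
  | inter (M N : Set G) :
      ShiftInterClosure C M → ShiftInterClosure C N → ShiftInterClosure C (M ∩ N)

/-! By induction, every member `D` of the closure comes with an intersection `H` of conjugates of
`C` such that `D = H h` for *every* `h ∈ D`. Two members that meet can therefore be written with the
same representative, `H h ∩ K h = (H ∩ K) h`, and shifting is `u (H h) v = (u H u⁻¹) (u h v)`. -/

open MulOpposite
open scoped Pointwise

section

variable {G : Type*} [Group G] {ι : Type*}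

/-- The intersection `⋂ i, (g i)⁻¹ C (g i)` of the conjugates of `C` by a family of elements, each
conjugate being encoded as the comap of `C` under `x ↦ (g i) x (g i)⁻¹`. -/
def conjInter (C : Subgroup G) (g : ι → G) : Subgroup G :=
  ⨅ i, C.comap (MulAut.conj (g i)).toMonoidHom

theorem mem_conjInter {C : Subgroup G} {g : ι → G} {x : G} :
    x ∈ conjInter C g ↔ ∀ i, g i * x * (g i)⁻¹ ∈ C := by
  simp [conjInter, Subgroup.mem_iInf]

theorem conjInter_one [Nonempty ι] (C : Subgroup G) : conjInter C (1 : ι → G) = C := by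
  ext x
  simp [mem_conjInter]

theorem comap_conj_conjInter (C : Subgroup G) (g : ι → G) (u : G) :
    (conjInter C g).comap (MulAut.conj u).toMonoidHom = conjInter C (fun i => g i * u) := by
  ext x
  simp [mem_conjInter, mul_assoc]

theorem conjInter_append (C : Subgroup G) {m n : ℕ} (g : Fin m → G) (k : Fin n → G) :
    conjInter C (Fin.append g k) = conjInter C g ⊓ conjInter C k := by
  ext x
  simp [mem_conjInter, Fin.forall_fin_add]

theorem image_mul_mul_op_smul_coe (H : Subgroup G) (u v h : G) :
    (fun m => u * m * v) '' (op h • (H : Set G)) =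
      op (u * h * v) • (H.comap (MulAut.conj u⁻¹).toMonoidHom : Set G) := by
  ext x
  have mem_shift_iff : x ∈ (fun m => u * m * v) '' (op h • (H : Set G)) ↔
      u⁻¹ * x * v⁻¹ ∈ op h • (H : Set G) :=
    Set.mem_image_iff_of_inverse (g := fun y => u⁻¹ * y * v⁻¹)
      (fun m => by simp [mul_assoc]) (fun y => by simp [mul_assoc])
  rw [mem_shift_iff, mem_rightCoset_iff, mem_rightCoset_iff]
  simp [mul_assoc]

theorem ShiftInterClosure.exists_forall_eq_op_smul_conjInter {C : Subgroup G} {D : Set G}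
    (hD : ShiftInterClosure C D) :
    ∃ n : ℕ, 1 ≤ n ∧ ∃ g : Fin n → G, ∀ h ∈ D, D = op h • (conjInter C g : Set G) := by
  induction hD with
  | base =>
    refine ⟨1, le_rfl, 1, fun h hh => ?_⟩
    rw [conjInter_one, rightCoset_mem_rightCoset C hh]
  | shift M u v _ ih =>
    obtain ⟨n, hn, g, hM⟩ := ih
    refine ⟨n, hn, fun i => g i * u⁻¹, ?_⟩
    rintro _ ⟨h, hh, rfl⟩
    rw [← comap_conj_conjInter, ← image_mul_mul_op_smul_coe, ← hM h hh]
  | inter M N _ _ ihM ihN =>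
    obtain ⟨m, hm, g, hM⟩ := ihM
    obtain ⟨n, -, k, hN⟩ := ihN
    refine ⟨m + n, Nat.le_add_right_of_le hm, Fin.append g k, ?_⟩
    rintro h ⟨hhM, hhN⟩
    rw [conjInter_append, Subgroup.coe_inf, Set.smul_set_inter, ← hM h hhM, ← hN h hhN]

end

/-- Every nonempty member `D` of the closure of `C` under shifts and intersections has the form
`D = (⋂_{i=1}^{n} g_i⁻¹ C g_i) · h`: a right coset of a finite intersection of conjugates of
`C` (here `g⁻¹ C g = {y | g y g⁻¹ ∈ C}` is the comap of `C` under conjugation by `g`). -/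
theorem shiftInterClosure_nonempty_eq_coset {G : Type*} [Group G] (C : Subgroup G)
    (D : Set G) (hD : ShiftInterClosure C D) (hne : D.Nonempty) :
    ∃ n : ℕ, 1 ≤ n ∧ ∃ (g : Fin n → G) (h : G),
      D = (fun x => x * h) ''
        ↑(⨅ i : Fin n, Subgroup.comap ((MulAut.conj (g i)).toMonoidHom) C) := by
  obtain ⟨n, hn, g, hg⟩ := hD.exists_forall_eq_op_smul_conjInter
  obtain ⟨h, hh⟩ := hne
  exact ⟨n, hn, g, h, hg h hh⟩
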